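/- Let 0<α≤1 and let {q_n : n≥0} be a non-increasing sequence of non-negative reals with q_0>0 satisfying n^α/Q_n = O(1) and (q_n − q_{n+1})/n^{α−2} = O(1) as n→∞. Then there exists a constant c_α such that for all N∈ℕ, all r ≥ M_N, all 0 ≤ k ≤ N−1, all 1 ≤ s_k ≤ m_k−1, and all x ∈ I_N(s_k e_k): ∫_{I_N} |F_r(x−t)| dμ(t) ≤ c_α M_k / M_N. -/

import Mathlib

open MeasureTheory Filter Finset Asymptotics
open scoped ENNReal NNReal

noncomputable section

namespace Vilenkin

/-- The Vilenkin group `G_m`: the complete direct product of the cyclic groups `Z_{m_n}`. -/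
abbrev G (m : ℕ → ℕ) := ∀ n, ZMod (m n)

/-- The generalized number system `M_0 = 1`, `M_{n+1} = m_n M_n`. -/
def MM (m : ℕ → ℕ) : ℕ → ℕ
  | 0 => 1
  | n + 1 => m n * MM m n

/-- The generalized Rademacher functions `r_k(x) = exp(2 π i x_k / m_k)`. -/
def rade (m : ℕ → ℕ) (k : ℕ) (x : G m) : ℂ :=
  Complex.exp (2 * Real.pi * Complex.I * ((x k).val : ℂ) / (m k : ℂ))

/-- The Vilenkin system `ψ_n = ∏_k r_k^{n_k}`, where `n = ∑_k n_k M_k` is the expansion of `n`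
in the generalized number system (the digits `n_k = (n / M_k) mod m_k` vanish for `k > n`). -/
def psi (m : ℕ → ℕ) (n : ℕ) (x : G m) : ℂ :=
  ∏ k ∈ Finset.range (n + 1), rade m k x ^ (n / MM m k % m k)

/-- The Dirichlet kernels `D_n = ∑_{k=0}^{n-1} ψ_k`. -/
def D (m : ℕ → ℕ) (n : ℕ) (x : G m) : ℂ := ∑ k ∈ Finset.range n, psi m k x

/-- The Fejér kernels `K_n = (1/n) ∑_{k=1}^{n} D_k`. -/
def K (m : ℕ → ℕ) (n : ℕ) (x : G m) : ℂ := (n : ℂ)⁻¹ * ∑ k ∈ Finset.Icc 1 n, D m k x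

/-- `Q_n = ∑_{k=0}^{n-1} q_k`. -/
def Q (q : ℕ → ℝ) (n : ℕ) : ℝ := ∑ k ∈ Finset.range n, q k

/-- The Nörlund kernels `F_n = (1/Q_n) ∑_{k=1}^{n} q_{n-k} D_k`. -/
def F (m : ℕ → ℕ) (q : ℕ → ℝ) (n : ℕ) (x : G m) : ℂ :=
  ((Q q n : ℝ) : ℂ)⁻¹ * ∑ k ∈ Finset.Icc 1 n, (q (n - k) : ℂ) * D m k x

/-- The interval (cylinder) `I_n(x) = {y : y_j = x_j for all j < n}`. -/
def cyl (m : ℕ → ℕ) (n : ℕ) (x : G m) : Set (G m) := {y | ∀ j < n, y j = x j}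

/-- The element `s_k e_k` of `G_m` (value `s_k` in coordinate `k`, zero elsewhere). -/
def oneSpike (m : ℕ → ℕ) (k sk : ℕ) : G m := fun j => if j = k then (sk : ZMod (m j)) else 0

/-- The element `s_k e_k + s_l e_l` of `G_m` (for `k ≠ l`). -/
def twoSpike (m : ℕ → ℕ) (k sk l sl : ℕ) : G m :=
  fun j => if j = k then (sk : ZMod (m j)) else if j = l then (sl : ZMod (m j)) else 0

/-- The σ-algebra `𝔉_n` generated by the intervals `I_n(x)`, i.e. by the first `n`
coordinates. -/
def filt (m : ℕ → ℕ) (n : ℕ) : MeasurableSpace (G m) :=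
  MeasurableSpace.comap (fun x (i : Fin n) => x i.val) inferInstance

/-- `f = (f^{(n)})` is a martingale with respect to the filtration `(𝔉_n)` and the measure `μ`. -/
def IsMartingale (m : ℕ → ℕ) (μ : Measure (G m)) (f : ℕ → G m → ℂ) : Prop :=
  (∀ n, Integrable (f n) μ) ∧ (∀ n, Measurable[filt m n] (f n)) ∧
    ∀ n, ∀ s : Set (G m), MeasurableSet[filt m n] s →
      ∫ x in s, f (n + 1) x ∂μ = ∫ x in s, f n x ∂μ

/-- The `L_p`-quasinorm `(∫ g^p dμ)^{1/p}` of a nonnegative (extended-real-valued) function. -/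
def lpNormE (m : ℕ → ℕ) (μ : Measure (G m)) (p : ℝ) (g : G m → ℝ≥0∞) : ℝ≥0∞ :=
  (∫⁻ x, g x ^ p ∂μ) ^ (1 / p)

/-- The martingale Hardy space quasinorm `‖f‖_{H_p} = ‖sup_n |f^{(n)}|‖_p`. -/
def HpNorm (m : ℕ → ℕ) (μ : Measure (G m)) (p : ℝ) (f : ℕ → G m → ℂ) : ℝ≥0∞ :=
  lpNormE m μ p (fun x => ⨆ n, (‖f n x‖₊ : ℝ≥0∞))

/-- The Vilenkin-Fourier coefficients of a martingale:
`f̂(i) = lim_k ∫ f^{(k)} conj ψ_i dμ`. -/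
def mcoef (m : ℕ → ℕ) (μ : Measure (G m)) (f : ℕ → G m → ℂ) (i : ℕ) : ℂ :=
  limUnder atTop fun k => ∫ x, f k x * (starRingEnd ℂ) (psi m i x) ∂μ

/-- The partial sums `S_n f = ∑_{k=0}^{n-1} f̂(k) ψ_k` of the Vilenkin-Fourier series of a
martingale. -/
def mS (m : ℕ → ℕ) (μ : Measure (G m)) (f : ℕ → G m → ℂ) (n : ℕ) (x : G m) : ℂ :=
  ∑ k ∈ Finset.range n, mcoef m μ f k * psi m k x

/-- The Nörlund means `t_n f = (1/Q_n) ∑_{k=1}^{n} q_{n-k} S_k f` of a martingale. -/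
def mT (m : ℕ → ℕ) (q : ℕ → ℝ) (μ : Measure (G m)) (f : ℕ → G m → ℂ) (n : ℕ) (x : G m) : ℂ :=
  ((Q q n : ℝ) : ℂ)⁻¹ * ∑ k ∈ Finset.Icc 1 n, (q (n - k) : ℂ) * mS m μ f k x

/-- The Cesàro numbers `A_0^α = 0`, `A_n^α = (α+1)⋯(α+n)/n!`. -/
def AC (α : ℝ) (n : ℕ) : ℝ :=
  if n = 0 then 0 else (∏ j ∈ Finset.Icc 1 n, (α + (j : ℝ))) / (n.factorial : ℝ)

/-- The `(C,α)` (Cesàro) means `σ_n^α f = (1/A_n^α) ∑_{k=1}^{n} A_{n-k}^{α-1} S_k f` of a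
martingale. -/
def mCes (m : ℕ → ℕ) (α : ℝ) (μ : Measure (G m)) (f : ℕ → G m → ℂ) (n : ℕ) (x : G m) : ℂ :=
  ((AC α n : ℝ) : ℂ)⁻¹ * ∑ k ∈ Finset.Icc 1 n, ((AC (α - 1) (n - k) : ℝ) : ℂ) * mS m μ f k x

/-- The Fejér means `σ_n f = (1/n) ∑_{k=1}^{n} S_k f` of a martingale. -/
def mFej (m : ℕ → ℕ) (μ : Measure (G m)) (f : ℕ → G m → ℂ) (n : ℕ) (x : G m) : ℂ :=
  (n : ℂ)⁻¹ * ∑ k ∈ Finset.Icc 1 n, mS m μ f k x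

/-- The Vilenkin-Fourier coefficients of an integrable function. -/
def fcoef (m : ℕ → ℕ) (μ : Measure (G m)) (g : G m → ℂ) (i : ℕ) : ℂ :=
  ∫ x, g x * (starRingEnd ℂ) (psi m i x) ∂μ

/-- The partial sums of the Vilenkin-Fourier series of an integrable function. -/
def fS (m : ℕ → ℕ) (μ : Measure (G m)) (g : G m → ℂ) (n : ℕ) (x : G m) : ℂ :=
  ∑ k ∈ Finset.range n, fcoef m μ g k * psi m k x

/-- The Nörlund means of an integrable function. -/
def fT (m : ℕ → ℕ) (q : ℕ → ℝ) (μ : Measure (G m)) (g : G m → ℂ) (n : ℕ) (x : G m) : ℂ :=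
  ((Q q n : ℝ) : ℂ)⁻¹ * ∑ k ∈ Finset.Icc 1 n, (q (n - k) : ℂ) * fS m μ g k x

/-!
If `x ∈ I_N(s_k e_k)` with `k < N` and `t ∈ I_N`, then the `k`-th coordinate of `x - t` is nonzero.
At such points all Dirichlet kernels, hence also their convex combinations `F_r`, are bounded by
`M_{k+1} ≤ B M_k`, and integrating over `I_N` gives the claim. As `N - 1` is truncated, `N = k = 0`
is admitted too, and there the claim says that the kernels `F_r` are bounded in `L¹`.

For the `L¹` bound, the identity `D_{(u+1)M_A-i} = D_{(u+1)M_A} - r_A^u ψ_{M_A-1} conj D_i` turns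
each block of `M_A` consecutive terms of `Q_n F_n` into a sum `∑_{i<M_A} q_i D_i`, whose `L¹` norm
is `O(Q_{M_A})` by summation by parts and the `L¹` bound for the Fejér kernels. Peeling off the
digits of `n` gives `Q_n ‖F_n‖₁ = O(∑_{M_j ≤ n} Q_{M_j})`. Finally `q_i - q_n = O(i^{α-1})`, so that
`Q_{M_j} ≤ M_j q_n + O(M_j^α)`, and both terms sum geometrically to `O(Q_n)`.
-/

section

open scoped ComplexConjugate

variable {m : ℕ → ℕ}

lemma MM_succ (n : ℕ) : MM m (n + 1) = m n * MM m n := rfl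

lemma MM_pos (hm : ∀ n, 2 ≤ m n) (n : ℕ) : 0 < MM m n := by
  induction n with
  | zero => exact one_pos
  | succ n ih => exact Nat.mul_pos (two_pos.trans_le (hm n)) ih

lemma two_mul_MM_le (hm : ∀ n, 2 ≤ m n) (n : ℕ) : 2 * MM m n ≤ MM m (n + 1) :=
  Nat.mul_le_mul_right _ (hm n)

lemma MM_strictMono (hm : ∀ n, 2 ≤ m n) : StrictMono (MM m) :=
  strictMono_nat_of_lt_succ fun n => by
    have := two_mul_MM_le hm n
    have := MM_pos hm n
    omega

lemma MM_dvd_MM {a b : ℕ} (h : a ≤ b) : MM m a ∣ MM m b := by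
  induction b, h using Nat.le_induction with
  | base => exact dvd_rfl
  | succ b _ ih => exact ih.trans (Dvd.intro_left _ rfl)

lemma mul_MM_add_lt_MM_succ {A u j : ℕ} (hu : u < m A) (hj : j < MM m A) :
    u * MM m A + j < MM m (A + 1) :=
  calc u * MM m A + j < (u + 1) * MM m A := by rw [add_mul, one_mul]; omega
    _ ≤ MM m (A + 1) := Nat.mul_le_mul_right _ hu

lemma exists_eq_mul_MM_add (hm : ∀ n, 2 ≤ m n) {A n : ℕ} (hn : n < MM m (A + 1)) :
    ∃ u j, n = u * MM m A + j ∧ u < m A ∧ j < MM m A :=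
  ⟨n / MM m A, n % MM m A, (Nat.div_add_mod' n _).symm,
    (Nat.div_lt_iff_lt_mul (MM_pos hm A)).2 hn, Nat.mod_lt _ (MM_pos hm A)⟩

lemma exists_MM_le_lt_MM_succ (hm : ∀ n, 2 ≤ m n) {n : ℕ} (hn : 1 ≤ n) :
    ∃ A, MM m A ≤ n ∧ n < MM m (A + 1) := by
  obtain ⟨A, hA, hA'⟩ := (MM_strictMono hm).exists_between_of_tendsto_atTop
    (MM_strictMono hm).tendsto_atTop (x := n + 1) (Nat.lt_succ_of_le hn)
  exact ⟨A, Nat.lt_succ_iff.1 hA, hA'⟩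

theorem digit_induction (hm : ∀ n, 2 ≤ m n) {P : ℕ → Prop} (zero : P 0)
    (step : ∀ A u j, 0 < u → u < m A → j < MM m A → P j → P (u * MM m A + j)) (n : ℕ) : P n := by
  induction n using Nat.strong_induction_on with
  | _ n ih =>
    rcases Nat.eq_zero_or_pos n with rfl | hn
    · exact zero
    obtain ⟨A, hA, hA'⟩ := exists_MM_le_lt_MM_succ hm hn
    obtain ⟨u, j, rfl, hu, hj⟩ := exists_eq_mul_MM_add hm hA'
    have hu0 : 0 < u := Nat.pos_of_ne_zero fun h => by subst h; omega
    exact step A u j hu0 hu hj (ih j (hj.trans_le hA))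

lemma sum_MM_le (hm : ∀ n, 2 ≤ m n) (A : ℕ) :
    ∑ j ∈ range (A + 1), MM m j ≤ 2 * MM m A := by
  induction A with
  | zero => simp [MM]
  | succ A ih =>
    rw [sum_range_succ]
    have := two_mul_MM_le hm A
    omega

lemma sum_MM_rpow_le (hm : ∀ n, 2 ≤ m n) {α : ℝ} (hα : 0 < α) (A : ℕ) :
    ∑ j ∈ range (A + 1), (MM m j : ℝ) ^ α ≤ 2 ^ α / (2 ^ α - 1) * (MM m A : ℝ) ^ α := by
  have hρ : 0 < (2 : ℝ) ^ α - 1 := sub_pos.2 (Real.one_lt_rpow one_lt_two hα)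
  have hratio : (2 : ℝ) ^ α / (2 ^ α - 1) = 1 / (2 ^ α - 1) + 1 := by field_simp; ring
  induction A with
  | zero =>
    have : 0 ≤ 1 / ((2 : ℝ) ^ α - 1) := by positivity
    simp [MM, hratio, -one_div, this]
  | succ A ih =>
    have hdouble : 2 ^ α * (MM m A : ℝ) ^ α ≤ (MM m (A + 1) : ℝ) ^ α := by
      rw [← Real.mul_rpow zero_le_two (Nat.cast_nonneg _)]
      exact Real.rpow_le_rpow (by positivity) (by exact_mod_cast two_mul_MM_le hm A) hα.le
    calc ∑ j ∈ range (A + 1 + 1), (MM m j : ℝ) ^ α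
        ≤ 2 ^ α / (2 ^ α - 1) * (MM m A : ℝ) ^ α + (MM m (A + 1) : ℝ) ^ α := by
          rw [sum_range_succ]; gcongr
      _ = 1 / (2 ^ α - 1) * (2 ^ α * (MM m A : ℝ) ^ α) + (MM m (A + 1) : ℝ) ^ α := by ring
      _ ≤ 1 / (2 ^ α - 1) * (MM m (A + 1) : ℝ) ^ α + (MM m (A + 1) : ℝ) ^ α := by gcongr
      _ = 2 ^ α / (2 ^ α - 1) * (MM m (A + 1) : ℝ) ^ α := by rw [hratio]; ring

lemma rade_eq_exp_pow (k : ℕ) (x : G m) :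
    rade m k x = Complex.exp (2 * Real.pi * Complex.I / m k) ^ (x k).val := by
  rw [rade, ← Complex.exp_nat_mul]
  ring_nf

lemma norm_rade (k : ℕ) (x : G m) : ‖rade m k x‖ = 1 := by
  rw [rade, show 2 * Real.pi * Complex.I * ((x k).val : ℂ) / (m k : ℂ) =
    ((2 * Real.pi * (x k).val / m k : ℝ) : ℂ) * Complex.I by push_cast; ring]
  exact Complex.norm_exp_ofReal_mul_I _

lemma sum_rade_pow {k : ℕ} (hk : m k ≠ 0) (x : G m) :
    ∑ v ∈ range (m k), rade m k x ^ v = if x k = 0 then (m k : ℂ) else 0 := by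
  have : NeZero (m k) := ⟨hk⟩
  have hroot := Complex.isPrimitiveRoot_exp (m k) hk
  split_ifs with h
  · simp [rade_eq_exp_pow, h]
  · have hne : rade m k x ≠ 1 := by
      rw [rade_eq_exp_pow]
      exact hroot.pow_ne_one_of_pos_of_lt (by simpa using h) (ZMod.val_lt _)
    have hpow : rade m k x ^ m k = 1 := by
      rw [rade_eq_exp_pow, pow_right_comm, hroot.pow_eq_one, one_pow]
    rw [geom_sum_eq hne, hpow, sub_self, zero_div]

lemma psi_eq_prod (hm : ∀ n, 2 ≤ m n) {n L : ℕ} (hL : n < MM m L) (x : G m) :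
    psi m n x = ∏ k ∈ range L, rade m k x ^ (n / MM m k % m k) := by
  have high_digits_vanish {L L' : ℕ} (hL : n < MM m L) (h : L ≤ L') :
      ∏ k ∈ range L, rade m k x ^ (n / MM m k % m k) =
        ∏ k ∈ range L', rade m k x ^ (n / MM m k % m k) := by
    refine prod_subset (range_mono h) fun k _ hk => ?_
    have hLk : MM m L ≤ MM m k := (MM_strictMono hm).monotone (by simpa using hk)
    rw [Nat.div_eq_of_lt (hL.trans_le hLk), Nat.zero_mod, pow_zero]
  rcases le_total (n + 1) L with h | h
  · exact high_digits_vanish ((MM_strictMono hm).le_apply (x := n + 1)) h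
  · exact (high_digits_vanish hL h).symm

lemma psi_mul_MM_add (hm : ∀ n, 2 ≤ m n) {A u j : ℕ} (hu : u < m A) (hj : j < MM m A) :
    psi m (u * MM m A + j) = rade m A ^ u * psi m j := by
  ext x
  rw [psi_eq_prod hm (mul_MM_add_lt_MM_succ hu hj), Pi.mul_apply, psi_eq_prod hm hj,
    prod_range_succ, mul_comm, Pi.pow_apply]
  congr 1
  · rw [mul_comm u, Nat.mul_add_div (MM_pos hm A), Nat.div_eq_of_lt hj, add_zero,
      Nat.mod_eq_of_lt hu]
  · refine prod_congr rfl fun k hk => ?_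
    obtain ⟨w, hw⟩ := MM_dvd_MM (m := m) (Nat.succ_le_of_lt (mem_range.1 hk))
    have : u * MM m A + j = MM m k * (m k * (w * u)) + j := by rw [hw, MM_succ]; ring
    rw [this, Nat.mul_add_div (MM_pos hm k), Nat.mul_add_mod]

lemma norm_psi (n : ℕ) (x : G m) : ‖psi m n x‖ = 1 := by
  simp [psi, norm_prod, norm_rade]

lemma psi_mul_psi_of_add_add_one_eq (hm : ∀ n, 2 ≤ m n) {A i j : ℕ} (h : i + j + 1 = MM m A) :
    psi m i * psi m j = psi m (MM m A - 1) := by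
  induction A generalizing i j with
  | zero =>
    obtain ⟨rfl, rfl⟩ : i = 0 ∧ j = 0 := by simp only [MM] at h; omega
    ext x
    simp [psi, MM]
  | succ A ih =>
    obtain ⟨u, i, rfl, hu, hi⟩ := exists_eq_mul_MM_add hm (show i < MM m (A + 1) by omega)
    obtain ⟨w, hw⟩ := Nat.exists_eq_add_of_lt hu
    obtain ⟨i', hi'⟩ := Nat.exists_eq_add_of_lt hi
    have hsucc : MM m (A + 1) = u * MM m A + w * MM m A + MM m A := by rw [MM_succ, hw]; ring
    have hj : j = w * MM m A + i' := by omega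
    have htop : MM m (A + 1) - 1 = (u + w) * MM m A + (MM m A - 1) := by rw [hsucc, add_mul]; omega
    rw [hj, htop, psi_mul_MM_add hm hu hi, psi_mul_MM_add hm (by omega) (by omega),
      psi_mul_MM_add hm (by omega) (by omega), ← ih hi'.symm]
    ring

lemma psi_MM_sub_one_sub (hm : ∀ n, 2 ≤ m n) {A i : ℕ} (hi : i < MM m A) :
    psi m (MM m A - 1 - i) = psi m (MM m A - 1) * conj (psi m i) := by
  have hunit : psi m i * conj (psi m i) = 1 := by
    ext x
    simp [Complex.mul_conj', norm_psi]
  rw [← psi_mul_psi_of_add_add_one_eq hm (i := MM m A - 1 - i) (j := i) (by omega), mul_assoc,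
    hunit, mul_one]

lemma D_zero : D m 0 = 0 := by
  ext
  simp [D]

lemma D_succ (n : ℕ) : D m (n + 1) = D m n + psi m n := by
  ext x
  simp [D, sum_range_succ]

lemma D_mul_MM_add (hm : ∀ n, 2 ≤ m n) {A u j : ℕ} (hu : u < m A) (hj : j ≤ MM m A) :
    D m (u * MM m A + j) = D m (u * MM m A) + rade m A ^ u * D m j := by
  induction j with
  | zero => simp [D_zero]
  | succ j ih =>
    rw [← add_assoc, D_succ, D_succ, ih (by omega), psi_mul_MM_add hm hu hj]
    ring

lemma D_mul_MM (hm : ∀ n, 2 ≤ m n) {A u : ℕ} (hu : u ≤ m A) :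
    D m (u * MM m A) = ∑ v ∈ range u, rade m A ^ v * D m (MM m A) := by
  induction u with
  | zero => simp [D_zero]
  | succ u ih =>
    rw [add_mul, one_mul, D_mul_MM_add hm hu le_rfl, ih (by omega), sum_range_succ]

lemma D_MM (hm : ∀ n, 2 ≤ m n) (A : ℕ) :
    D m (MM m A) = (cyl m A 0).indicator fun _ => (MM m A : ℂ) := by
  classical
  induction A with
  | zero =>
    ext x
    simp [D, MM, psi, cyl]
  | succ A ih =>
    ext x
    have hsucc : x ∈ cyl m (A + 1) 0 ↔ x A = 0 ∧ x ∈ cyl m A 0 := by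
      simp only [cyl, Set.mem_ofPred_eq, Nat.forall_lt_succ_right, Pi.zero_apply, and_comm]
    rw [MM_succ, D_mul_MM hm le_rfl, ← sum_mul, Pi.mul_apply, Finset.sum_apply]
    simp only [Pi.pow_apply]
    rw [sum_rade_pow (by have := hm A; omega), ih, Set.indicator_apply, Set.indicator_apply]
    simp only [hsucc]
    split_ifs <;> simp_all

lemma D_mul_MM_apply_eq_zero (hm : ∀ n, 2 ≤ m n) {A u : ℕ} (hu : u ≤ m A) {x : G m}
    (hx : x ∉ cyl m A 0) : D m (u * MM m A) x = 0 := by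
  simp [D_mul_MM hm hu, D_MM hm, hx]

lemma norm_D_le (n : ℕ) (x : G m) : ‖D m n x‖ ≤ n := by
  simpa [D, norm_psi] using norm_sum_le (range n) fun k => psi m k x

lemma norm_D_le_of_apply_ne_zero (hm : ∀ n, 2 ≤ m n) {k : ℕ} {x : G m} (hx : x k ≠ 0) (n : ℕ) :
    ‖D m n x‖ ≤ MM m (k + 1) := by
  induction n using digit_induction hm with
  | zero => simp [D_zero]
  | step A u j _ hu hj ih =>
    by_cases hA : k < A
    · have hx' : x ∉ cyl m A 0 := fun h => hx (h k hA)
      simpa [D_mul_MM_add hm hu hj.le, D_mul_MM_apply_eq_zero hm hu.le hx', norm_rade] using ih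
    · have hlt : u * MM m A + j < MM m (k + 1) :=
        (mul_MM_add_lt_MM_succ hu hj).trans_le ((MM_strictMono hm).monotone (by omega))
      exact (norm_D_le _ x).trans (by exact_mod_cast hlt.le)

lemma D_succ_mul_MM_sub (hm : ∀ n, 2 ≤ m n) {A u i : ℕ} (hu : u < m A) (hi : i ≤ MM m A) :
    D m ((u + 1) * MM m A - i) =
      D m ((u + 1) * MM m A) - rade m A ^ u * psi m (MM m A - 1) * conj (D m i) := by
  induction i with
  | zero => simp [D_zero]
  | succ i ih =>
    have hmul : (u + 1) * MM m A = u * MM m A + MM m A := by ring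
    have hindex : (u + 1) * MM m A - (i + 1) = u * MM m A + (MM m A - 1 - i) := by omega
    have hstep : D m ((u + 1) * MM m A - i) = D m ((u + 1) * MM m A - (i + 1)) +
        rade m A ^ u * (psi m (MM m A - 1) * conj (psi m i)) := by
      rw [← psi_MM_sub_one_sub hm hi, ← psi_mul_MM_add hm hu (by omega), ← hindex, ← D_succ]
      congr 1
      omega
    rw [D_succ i, map_add]
    linear_combination ih (by omega) - hstep

section

lemma mul_rpow_le_rpow_sub_rpow {p x : ℝ} (hp : 0 ≤ p) (hp1 : p ≤ 1) (hx : 0 ≤ x) :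
    p * (x + 1) ^ (p - 1) ≤ (x + 1) ^ p - x ^ p := by
  have hx1 : 0 < x + 1 := by linarith
  have hbernoulli : (x / (x + 1)) ^ p ≤ 1 - p / (x + 1) := by
    have h := rpow_one_add_le_one_add_mul_self (s := -(1 / (x + 1)))
      (by rw [neg_le_neg_iff, div_le_one hx1]; linarith) hp hp1
    calc (x / (x + 1)) ^ p = (1 + -(1 / (x + 1))) ^ p := by congr 1; field_simp; ring
      _ ≤ 1 - p / (x + 1) := h.trans_eq (by ring)
  have hsplit : x ^ p = (x + 1) ^ p * (x / (x + 1)) ^ p := by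
    rw [← Real.mul_rpow hx1.le (by positivity), mul_div_cancel₀ _ hx1.ne']
  have := mul_le_mul_of_nonneg_left hbernoulli (Real.rpow_nonneg hx1.le p)
  rw [Real.rpow_sub_one hx1.ne', hsplit]
  linear_combination this

lemma neg_mul_rpow_le_rpow_sub_rpow {p x : ℝ} (hp : p ≤ 0) (hx : 0 < x) :
    -p * (x + 1) ^ (p - 1) ≤ x ^ p - (x + 1) ^ p := by
  have hx1 : 0 < x + 1 := by linarith
  have hbernoulli : 1 - p / (x + 1) ≤ (x / (x + 1)) ^ p := by
    have hlog : Real.log (x / (x + 1)) ≤ -(1 / (x + 1)) :=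
      (Real.log_le_sub_one_of_pos (by positivity)).trans_eq (by field_simp; ring)
    calc 1 - p / (x + 1) = p * -(1 / (x + 1)) + 1 := by ring
      _ ≤ p * Real.log (x / (x + 1)) + 1 := by
        gcongr ?_ + 1
        exact mul_le_mul_of_nonpos_left hlog hp
      _ ≤ Real.exp (p * Real.log (x / (x + 1))) := Real.add_one_le_exp _
      _ = (x / (x + 1)) ^ p := by rw [Real.rpow_def_of_pos (by positivity), mul_comm]
  have hsplit : x ^ p = (x + 1) ^ p * (x / (x + 1)) ^ p := by
    rw [← Real.mul_rpow hx1.le (by positivity), mul_div_cancel₀ _ hx1.ne']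
  have := mul_le_mul_of_nonneg_left hbernoulli (Real.rpow_nonneg hx1.le p)
  rw [Real.rpow_sub_one hx1.ne', hsplit]
  linear_combination this

lemma sum_rpow_sub_one_le {p : ℝ} (hp : 0 < p) (hp1 : p ≤ 1) (n : ℕ) :
    ∑ i ∈ range n, ((i : ℝ) + 1) ^ (p - 1) ≤ (n : ℝ) ^ p / p := by
  rw [le_div_iff₀' hp, mul_sum]
  calc ∑ i ∈ range n, p * ((i : ℝ) + 1) ^ (p - 1)
      ≤ ∑ i ∈ range n, (((i + 1 : ℕ) : ℝ) ^ p - (i : ℝ) ^ p) :=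
        sum_le_sum fun i _ => by
          exact_mod_cast mul_rpow_le_rpow_sub_rpow hp.le hp1 (Nat.cast_nonneg i)
    _ = (n : ℝ) ^ p := by
        rw [sum_range_sub fun i : ℕ => (i : ℝ) ^ p, Nat.cast_zero, Real.zero_rpow hp.ne', sub_zero]

variable {q : ℕ → ℝ}

lemma Q_nonneg (hq : ∀ n, 0 ≤ q n) (n : ℕ) : 0 ≤ Q q n := sum_nonneg fun k _ => hq k

lemma Q_mono (hq : ∀ n, 0 ≤ q n) : Monotone (Q q) := fun _ _ h =>
  sum_le_sum_of_subset_of_nonneg (range_mono h) fun k _ _ => hq k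

lemma Q_pos (hq0 : 0 < q 0) (hq : ∀ n, 0 ≤ q n) {n : ℕ} (hn : n ≠ 0) : 0 < Q q n :=
  hq0.trans_le (single_le_sum (fun k _ => hq k) (mem_range.2 (Nat.pos_of_ne_zero hn)))

lemma Q_shift_le (hq : Antitone q) (p n : ℕ) : Q (fun i => q (p + i)) n ≤ Q q n :=
  sum_le_sum fun i _ => hq (Nat.le_add_left i p)

lemma mul_le_Q (hq : Antitone q) (n : ℕ) : n * q n ≤ Q q n := by
  simpa [Q] using card_nsmul_le_sum (range n) q (q n) fun i hi => hq (mem_range.1 hi).le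

lemma exists_rpow_le_mul_Q {α : ℝ} (hq0 : 0 < q 0) (hq : ∀ n, 0 ≤ q n)
    (hQ : (fun n : ℕ => (n : ℝ) ^ α / Q q n) =O[atTop] fun _ => (1 : ℝ)) :
    ∃ C > 0, ∀ n : ℕ, n ≠ 0 → (n : ℝ) ^ α ≤ C * Q q n := by
  obtain ⟨C, hC, hbound⟩ := bound_of_isBigO_nat_atTop hQ
  refine ⟨C, hC, fun n hn => (div_le_iff₀ (Q_pos hq0 hq hn)).1 ?_⟩
  simpa using (Real.le_norm_self _).trans (hbound (x := n) one_ne_zero)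

lemma exists_sub_succ_le_mul_rpow {p : ℝ}
    (hq : (fun n : ℕ => (q n - q (n + 1)) / (n : ℝ) ^ p) =O[atTop] fun _ => (1 : ℝ)) :
    ∃ C > 0, ∀ n : ℕ, n ≠ 0 → q n - q (n + 1) ≤ C * (n : ℝ) ^ p := by
  obtain ⟨C, hC, hbound⟩ := bound_of_isBigO_nat_atTop hq
  refine ⟨C, hC, fun n hn => (div_le_iff₀ (by positivity)).1 ?_⟩
  simpa using (Real.le_norm_self _).trans (hbound (x := n) one_ne_zero)

lemma sub_le_mul_rpow_sub_rpow {p C : ℝ} (hp : p < 0) (hC : 0 ≤ C)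
    (hq : ∀ n : ℕ, n ≠ 0 → q n - q (n + 1) ≤ C * (n : ℝ) ^ (p - 1)) {i n : ℕ} (hi : i ≠ 0)
    (hin : i ≤ n) :
    q (i + 1) - q (n + 1) ≤ C / -p * ((i : ℝ) ^ p - (n : ℝ) ^ p) := by
  induction n, hin using Nat.le_induction with
  | base => simp
  | succ n hin ih =>
    have hn : (0 : ℝ) < n := by exact_mod_cast (Nat.pos_of_ne_zero hi).trans_le hin
    have hstep : q (n + 1) - q (n + 1 + 1) ≤ C / -p * ((n : ℝ) ^ p - ((n + 1 : ℕ) : ℝ) ^ p) :=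
      calc q (n + 1) - q (n + 1 + 1) ≤ C / -p * (-p * ((n : ℝ) + 1) ^ (p - 1)) := by
            rw [← mul_assoc, div_mul_cancel₀ _ (neg_pos.2 hp).ne']
            exact_mod_cast hq (n + 1) n.succ_ne_zero
        _ ≤ C / -p * ((n : ℝ) ^ p - ((n + 1 : ℕ) : ℝ) ^ p) := by
            push_cast
            have := neg_pos.2 hp
            gcongr
            exact neg_mul_rpow_le_rpow_sub_rpow hp.le hn
    linear_combination ih + hstep

lemma sub_le_mul_rpow {p C : ℝ} (hp : p < 0) (hC : 0 ≤ C) (hanti : Antitone q)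
    (hq : ∀ n : ℕ, n ≠ 0 → q n - q (n + 1) ≤ C * (n : ℝ) ^ (p - 1)) {i n : ℕ} (hi : i ≠ 0)
    (hin : i ≤ n) :
    q i - q n ≤ (C + C / -p) * (i : ℝ) ^ p := by
  have hi1 : (1 : ℝ) ≤ i := by exact_mod_cast Nat.one_le_iff_ne_zero.2 hi
  have hfirst : q i - q (i + 1) ≤ C * (i : ℝ) ^ p :=
    (hq i hi).trans (by gcongr; linarith)
  have hrest : q (i + 1) - q (n + 1) ≤ C / -p * (i : ℝ) ^ p :=
    (sub_le_mul_rpow_sub_rpow hp hC hq hi hin).trans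
      (mul_le_mul_of_nonneg_left (sub_le_self _ (by positivity))
        (div_nonneg hC (neg_pos.2 hp).le))
  linear_combination hfirst + hrest + hanti n.le_succ

lemma exists_sub_le_mul_rpow_sub_one {α C : ℝ} (hα : α ≤ 1) (hC : 0 ≤ C) (hpos : ∀ n, 0 ≤ q n)
    (hanti : Antitone q) (hq : ∀ n : ℕ, n ≠ 0 → q n - q (n + 1) ≤ C * (n : ℝ) ^ (α - 2)) :
    ∃ E ≥ 0, ∀ i n : ℕ, i ≠ 0 → i ≤ n → q i - q n ≤ E * (i : ℝ) ^ (α - 1) := by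
  rcases hα.lt_or_eq with hα | rfl
  · have hexp : α - 2 = α - 1 - 1 := by ring
    rw [hexp] at hq
    have hneg := sub_neg.2 hα
    exact ⟨C + C / -(α - 1), add_nonneg hC (div_nonneg hC (neg_pos.2 hneg).le),
      fun i n hi hin => sub_le_mul_rpow hneg hC hanti hq hi hin⟩
  · refine ⟨q 0, hpos 0, fun i n _ _ => ?_⟩
    simpa using (sub_le_self _ (hpos n)).trans (hanti i.zero_le)

lemma Q_le_mul_add_mul_rpow {α E : ℝ} (hα0 : 0 < α) (hα1 : α ≤ 1) (hE : 0 ≤ E)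
    (hpos : ∀ n, 0 ≤ q n)
    (hq : ∀ i n : ℕ, i ≠ 0 → i ≤ n → q i - q n ≤ E * (i : ℝ) ^ (α - 1)) {k n : ℕ} (hk : k ≠ 0)
    (hkn : k ≤ n) :
    Q q k ≤ k * q n + (q 0 + E / α) * (k : ℝ) ^ α := by
  obtain ⟨k, rfl⟩ := Nat.exists_eq_succ_of_ne_zero hk
  have hone : 1 ≤ ((k + 1 : ℕ) : ℝ) ^ α := Real.one_le_rpow (by simp) hα0.le
  have htail : ∑ i ∈ range k, (q (i + 1) - q n) ≤ E / α * ((k + 1 : ℕ) : ℝ) ^ α :=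
    calc ∑ i ∈ range k, (q (i + 1) - q n)
        ≤ ∑ i ∈ range k, E * ((i : ℝ) + 1) ^ (α - 1) :=
          sum_le_sum fun i hi => by
            exact_mod_cast hq (i + 1) n i.succ_ne_zero (by have := mem_range.1 hi; omega)
      _ ≤ E * ((k : ℝ) ^ α / α) := by
          rw [← mul_sum]
          exact mul_le_mul_of_nonneg_left (sum_rpow_sub_one_le hα0 hα1 k) hE
      _ = E / α * (k : ℝ) ^ α := by ring
      _ ≤ E / α * ((k + 1 : ℕ) : ℝ) ^ α := by gcongr; simp
  have hhead : q 0 - q n ≤ q 0 * ((k + 1 : ℕ) : ℝ) ^ α :=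
    (sub_le_self _ (hpos n)).trans (le_mul_of_one_le_right (hpos 0) hone)
  have hsplit : Q q (k + 1) =
      ((k + 1 : ℕ) : ℝ) * q n + (∑ i ∈ range k, (q (i + 1) - q n) + (q 0 - q n)) := by
    rw [← sum_range_succ' (fun i => q i - q n), sum_sub_distrib, sum_const, card_range,
      nsmul_eq_mul, Q]
    ring
  rw [hsplit]
  linear_combination htail + hhead

theorem exists_sum_Q_MM_le {m : ℕ → ℕ} (hm : ∀ n, 2 ≤ m n) {α : ℝ} (hα0 : 0 < α) (hα1 : α ≤ 1)
    (hq0 : 0 < q 0) (hpos : ∀ n, 0 ≤ q n) (hanti : Antitone q)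
    (hQ : (fun n : ℕ => (n : ℝ) ^ α / Q q n) =O[atTop] fun _ => (1 : ℝ))
    (hq : (fun n : ℕ => (q n - q (n + 1)) / (n : ℝ) ^ (α - 2)) =O[atTop] fun _ => (1 : ℝ)) :
    ∃ C ≥ 0, ∀ A n, MM m A ≤ n → ∑ j ∈ range (A + 1), Q q (MM m j) ≤ C * Q q n := by
  obtain ⟨C₁, hC₁, hlower⟩ := exists_rpow_le_mul_Q hq0 hpos hQ
  obtain ⟨C₂, hC₂, hdiff⟩ := exists_sub_succ_le_mul_rpow hq
  obtain ⟨E, hE, hsub⟩ := exists_sub_le_mul_rpow_sub_one hα1 hC₂.le hpos hanti hdiff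
  set R : ℝ := 2 ^ α / (2 ^ α - 1)
  have hR : 0 ≤ R :=
    div_nonneg (by positivity) (sub_nonneg.2 (Real.one_le_rpow one_le_two hα0.le))
  have : 0 ≤ q 0 + E / α := add_nonneg (hpos 0) (div_nonneg hE hα0.le)
  refine ⟨2 + (q 0 + E / α) * R * C₁, by positivity, fun A n hAn => ?_⟩
  have hn : n ≠ 0 := ((MM_pos hm A).trans_le hAn).ne'
  have hlinear : ∑ j ∈ range (A + 1), (MM m j : ℝ) * q n ≤ 2 * Q q n := by
    rw [← sum_mul]
    calc (∑ j ∈ range (A + 1), (MM m j : ℝ)) * q n ≤ 2 * n * q n := by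
          gcongr
          · exact hpos n
          · exact_mod_cast (sum_MM_le hm A).trans (by gcongr)
      _ ≤ 2 * Q q n := by rw [mul_assoc]; gcongr; exact mul_le_Q hanti n
  have hpower : ∑ j ∈ range (A + 1), (MM m j : ℝ) ^ α ≤ R * (C₁ * Q q n) :=
    (sum_MM_rpow_le hm hα0 A).trans <| by
      gcongr
      exact (Real.rpow_le_rpow (by positivity) (by exact_mod_cast hAn) hα0.le).trans (hlower n hn)
  calc ∑ j ∈ range (A + 1), Q q (MM m j)
      ≤ ∑ j ∈ range (A + 1), ((MM m j : ℝ) * q n + (q 0 + E / α) * (MM m j : ℝ) ^ α) :=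
        sum_le_sum fun j hj => Q_le_mul_add_mul_rpow hα0 hα1 hE hpos hsub (MM_pos hm j).ne'
          (((MM_strictMono hm).monotone (Nat.lt_succ_iff.1 (mem_range.1 hj))).trans hAn)
    _ ≤ 2 * Q q n + (q 0 + E / α) * (R * (C₁ * Q q n)) := by
        rw [sum_add_distrib, ← mul_sum]
        gcongr
    _ = (2 + (q 0 + E / α) * R * C₁) * Q q n := by ring

end

section

variable {Ω E : Type*} {mΩ : MeasurableSpace Ω} {μ : Measure Ω} {p : ℝ≥0∞} [NormedAddCommGroup E]

lemma lpNorm_mul_le_of_norm_le_one {f g : Ω → ℂ} (hg : ∀ x, ‖g x‖ ≤ 1) (hf : MemLp f p μ) :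
    lpNorm (g * f) p μ ≤ lpNorm f p μ := by
  rw [← lpNorm_norm hf.aestronglyMeasurable]
  refine lpNorm_mono_real hf.norm fun x => ?_
  simpa using mul_le_of_le_one_left (norm_nonneg (f x)) (hg x)

lemma memLp_mul_of_norm_le_one {f g : Ω → ℂ} (hgm : AEStronglyMeasurable g μ)
    (hg : ∀ x, ‖g x‖ ≤ 1) (hf : MemLp f p μ) : MemLp (g * f) p μ :=
  hf.of_le (hgm.mul hf.aestronglyMeasurable) <| .of_forall fun x => by
    simpa using mul_le_of_le_one_left (norm_nonneg (f x)) (hg x)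

lemma memLp_nsmul [NormedSpace ℝ E] {f : Ω → E} (hf : MemLp f p μ) (n : ℕ) :
    MemLp (n • f) p μ := by
  rw [← Nat.cast_smul_eq_nsmul ℝ]
  exact hf.const_smul _

lemma lpNorm_one_indicator_const {s : Set Ω} (hs : MeasurableSet s) (c : E) :
    lpNorm (s.indicator fun _ => c) 1 μ = μ.real s * ‖c‖ := by
  rw [lpNorm_one_eq_integral_norm (stronglyMeasurable_const.indicator hs).aestronglyMeasurable]
  simp only [norm_indicator_eq_indicator_norm]
  rw [integral_indicator_const _ hs, smul_eq_mul]

lemma lpNorm_sum_smul_le_of_antitone [NormedSpace ℝ E] {f : ℕ → Ω → E} {a : ℕ → ℝ} {C : ℝ}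
    (hp : 1 ≤ p) (hf : ∀ i, MemLp (f i) p μ) (hpos : ∀ n, 0 ≤ a n) (hanti : Antitone a)
    (hC : ∀ n, lpNorm (∑ i ∈ range n, f i) p μ ≤ C * n) (n : ℕ) :
    lpNorm (∑ i ∈ range n, a i • f i) p μ ≤ C * ∑ i ∈ range n, a i := by
  rcases n with - | n
  · simp
  have hsum (k : ℕ) : MemLp (∑ i ∈ range k, f i) p μ := memLp_finsetSum' _ fun i _ => hf i
  have hsmul {c : ℝ} (hc : 0 ≤ c) (k : ℕ) :
      lpNorm (c • ∑ i ∈ range k, f i) p μ ≤ c * (C * k) := by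
    rw [lpNorm_const_smul, coe_nnnorm, Real.norm_of_nonneg hc]
    exact mul_le_mul_of_nonneg_left (hC k) hc
  have hdiff (i : ℕ) : 0 ≤ a i - a (i + 1) := sub_nonneg.2 (hanti i.le_succ)
  calc lpNorm (∑ i ∈ range (n + 1), a i • f i) p μ
      = lpNorm (a n • ∑ i ∈ range (n + 1), f i +
          ∑ i ∈ range n, (a i - a (i + 1)) • ∑ j ∈ range (i + 1), f j) p μ := by
        rw [sum_range_by_parts, Nat.add_sub_cancel, sub_eq_add_neg, ← sum_neg_distrib]
        simp only [← neg_smul, neg_sub]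
    _ ≤ a n * (C * (n + 1 : ℕ)) + ∑ i ∈ range n, (a i - a (i + 1)) * (C * (i + 1 : ℕ)) := by
        refine (lpNorm_add_le ((hsum _).const_smul _) hp).trans
          (add_le_add (hsmul (hpos n) _) ?_)
        exact (lpNorm_sum_le (fun i _ => (hsum _).const_smul _) hp).trans
          (sum_le_sum fun i _ => hsmul (hdiff i) _)
    _ = C * ∑ i ∈ range (n + 1), a i := by
        have := sum_range_by_parts a (fun _ => (1 : ℝ)) (n + 1)
        simp only [smul_eq_mul, mul_one, sum_const, card_range, nsmul_eq_mul,
          Nat.add_sub_cancel] at this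
        rw [this, mul_sub, mul_sum, sub_eq_add_neg, ← sum_neg_distrib]
        congr 1
        · ring
        · exact sum_congr rfl fun i _ => by ring

end

/-- `μ` is the normalized Haar measure of `G_m`, which is characterized by its values `1 / M_n` on
the intervals `I_n(x)`. -/
class IsVilenkinHaar (μ : Measure (G m)) : Prop where
  measure_cyl : ∀ n x, μ (cyl m n x) = (MM m n : ℝ≥0∞)⁻¹

instance (μ : Measure (G m)) [IsVilenkinHaar μ] : IsProbabilityMeasure μ where
  measure_univ := by simpa [cyl, MM] using IsVilenkinHaar.measure_cyl (μ := μ) 0 0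

lemma measurableSet_cyl (n : ℕ) (x : G m) : MeasurableSet (cyl m n x) := by
  have : cyl m n x = ⋂ j, ⋂ _ : j < n, (fun y : G m => y j) ⁻¹' {x j} := by
    ext y
    simp [cyl]
  rw [this]
  exact .iInter fun j => .iInter fun _ => measurable_pi_apply j (by trivial)

lemma measurable_sub_left (x : G m) : Measurable fun t : G m => x - t :=
  measurable_pi_lambda _ fun j =>
    (measurable_from_top (f := fun z : ZMod (m j) => x j - z)).comp (measurable_pi_apply j)

instance (μ : Measure (G m)) [IsVilenkinHaar μ] (x : G m) :
    IsVilenkinHaar (μ.map fun t => x - t) where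
  measure_cyl n y := by
    have : (fun t => x - t) ⁻¹' cyl m n y = cyl m n (x - y) := by
      ext t
      simp only [cyl, Set.mem_preimage, Set.mem_ofPred_eq, Pi.sub_apply]
      exact forall₂_congr fun j _ => by
        rw [sub_eq_iff_eq_add, eq_sub_iff_add_eq, add_comm, eq_comm]
    rw [Measure.map_apply (measurable_sub_left x) (measurableSet_cyl n y), this,
      IsVilenkinHaar.measure_cyl]

lemma measurable_rade (k : ℕ) : Measurable (rade m k) :=
  (measurable_from_top (f := fun z : ZMod (m k) =>
    Complex.exp (2 * Real.pi * Complex.I * (z.val : ℂ) / (m k : ℂ)))).comp (measurable_pi_apply k)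

lemma measurable_psi (n : ℕ) : Measurable (psi m n) :=
  Finset.measurable_fun_prod _ fun k _ => (measurable_rade k).pow_const _

lemma measurable_D (n : ℕ) : Measurable (D m n) :=
  Finset.measurable_fun_sum _ fun k _ => measurable_psi k

section

variable {μ : Measure (G m)} {p : ℝ≥0∞}

lemma memLp_D [IsFiniteMeasure μ] (n : ℕ) : MemLp (D m n) p μ :=
  .of_bound (measurable_D n).aestronglyMeasurable n (.of_forall (norm_D_le n))

lemma norm_rade_pow (k u : ℕ) (x : G m) : ‖(rade m k ^ u) x‖ = 1 := by simp [norm_rade]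

lemma memLp_rade_pow_mul {f : G m → ℂ} (hf : MemLp f p μ) (k u : ℕ) :
    MemLp (rade m k ^ u * f) p μ :=
  memLp_mul_of_norm_le_one ((measurable_rade k).pow_const u).aestronglyMeasurable
    (fun x => (norm_rade_pow k u x).le) hf

lemma lpNorm_rade_pow_mul_le {f : G m → ℂ} (hf : MemLp f p μ) (k u : ℕ) :
    lpNorm (rade m k ^ u * f) p μ ≤ lpNorm f p μ :=
  lpNorm_mul_le_of_norm_le_one (fun x => (norm_rade_pow k u x).le) hf

variable [IsVilenkinHaar μ]

lemma measureReal_cyl (n : ℕ) (x : G m) : μ.real (cyl m n x) = (MM m n : ℝ)⁻¹ := by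
  simp [measureReal_def, IsVilenkinHaar.measure_cyl]

lemma lpNorm_D_MM (hm : ∀ n, 2 ≤ m n) (A : ℕ) : lpNorm (D m (MM m A)) 1 μ = 1 := by
  have : (MM m A : ℝ) ≠ 0 := by exact_mod_cast (MM_pos hm A).ne'
  rw [D_MM hm, lpNorm_one_indicator_const (measurableSet_cyl A 0), measureReal_cyl,
    Complex.norm_natCast, inv_mul_cancel₀ this]

lemma lpNorm_D_mul_MM_le (hm : ∀ n, 2 ≤ m n) {A u : ℕ} (hu : u ≤ m A) :
    lpNorm (D m (u * MM m A)) 1 μ ≤ u := by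
  rw [D_mul_MM hm hu]
  calc lpNorm (∑ v ∈ range u, rade m A ^ v * D m (MM m A)) 1 μ
      ≤ ∑ v ∈ range u, lpNorm (rade m A ^ v * D m (MM m A)) 1 μ :=
        lpNorm_sum_le (fun v _ => memLp_rade_pow_mul (memLp_D _) A v) le_rfl
    _ ≤ ∑ _v ∈ range u, 1 := sum_le_sum fun v _ =>
        (lpNorm_rade_pow_mul_le (memLp_D _) A v).trans_eq (lpNorm_D_MM hm A)
    _ = u := by simp

end

/-- The unnormalized Fejér kernel `∑_{i < n} D_i`. -/
def dirichletSum (m : ℕ → ℕ) (n : ℕ) : G m → ℂ := ∑ i ∈ range n, D m i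

lemma dirichletSum_mul_MM_add (hm : ∀ n, 2 ≤ m n) {A u j : ℕ} (hu : u < m A) (hj : j ≤ MM m A) :
    dirichletSum m (u * MM m A + j) =
      dirichletSum m (u * MM m A) + j • D m (u * MM m A) + rade m A ^ u * dirichletSum m j := by
  have hD : ∀ i ∈ range j,
      D m (u * MM m A + i) = D m (u * MM m A) + rade m A ^ u * D m i := fun i hi =>
    D_mul_MM_add hm hu ((mem_range.1 hi).le.trans hj)
  rw [dirichletSum, sum_range_add, sum_congr rfl hD, sum_add_distrib, sum_const, card_range,
    ← mul_sum, add_assoc]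
  rfl

lemma dirichletSum_mul_MM (hm : ∀ n, 2 ≤ m n) {A u : ℕ} (hu : u ≤ m A) :
    dirichletSum m (u * MM m A) = ∑ v ∈ range u,
      (MM m A • D m (v * MM m A) + rade m A ^ v * dirichletSum m (MM m A)) := by
  induction u with
  | zero => simp [dirichletSum]
  | succ u ih =>
    rw [add_mul, one_mul, dirichletSum_mul_MM_add hm hu le_rfl, ih (by omega), sum_range_succ,
      add_assoc]

/-- The elements of `G_m` whose first `A` coordinates vanish, except possibly the `j`-th one.
The kernel `dirichletSum m (MM m A)` is supported on the union of these sets over `j < A`. -/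
def axis (m : ℕ → ℕ) (A j : ℕ) : Set (G m) := {y | ∀ l < A, l ≠ j → y l = 0}

lemma mem_axis_succ {A j : ℕ} {y : G m} (hy : y ∈ axis m A j) (hA : y A = 0) :
    y ∈ axis m (A + 1) j := fun l hl hlj => by
  rcases Nat.lt_succ_iff_lt_or_eq.1 hl with h | rfl
  exacts [hy l h hlj, hA]

lemma mem_axis_succ_self {A : ℕ} {y : G m} (hy : y ∈ cyl m A 0) : y ∈ axis m (A + 1) A :=
  fun l hl hlA => hy l (by omega)

lemma measurableSet_axis (A j : ℕ) : MeasurableSet (axis m A j) := by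
  have : axis m A j = ⋂ l, ⋂ _ : l < A, ⋂ _ : l ≠ j, (fun y : G m => y l) ⁻¹' {0} := by
    ext y
    simp [axis]
  rw [this]
  exact .iInter fun l => .iInter fun _ => .iInter fun _ => measurable_pi_apply l (by trivial)

lemma axis_subset_iUnion_cyl (A j : ℕ) :
    axis m A j ⊆ ⋃ v : ZMod (m j), cyl m A (Function.update 0 j v) := fun y hy => by
  refine Set.mem_iUnion.2 ⟨y j, fun l hl => ?_⟩
  by_cases h : l = j
  · subst h
    simp
  · rw [Function.update_of_ne h]
    exact hy l hl h

lemma measureReal_axis_le {μ : Measure (G m)} [IsVilenkinHaar μ] (A : ℕ) {j : ℕ} (hj : m j ≠ 0) :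
    μ.real (axis m A j) ≤ m j / MM m A := by
  have : NeZero (m j) := ⟨hj⟩
  calc μ.real (axis m A j)
      ≤ ∑ v : ZMod (m j), μ.real (cyl m A (Function.update 0 j v)) :=
        (measureReal_mono (axis_subset_iUnion_cyl A j)).trans (measureReal_iUnion_fintype_le _)
    _ = m j / MM m A := by simp [measureReal_cyl, div_eq_mul_inv]

lemma indicator_axis_nonneg (A j : ℕ) (y : G m) :
    0 ≤ (axis m A j).indicator (fun _ => (MM m A * MM m (j + 1) : ℝ)) y :=
  Set.indicator_nonneg (fun _ _ => by positivity) y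

lemma norm_smul_sum_D_mul_MM_le (hm : ∀ n, 2 ≤ m n) (A : ℕ) (y : G m) :
    ‖∑ v ∈ range (m A), (MM m A • D m (v * MM m A)) y‖ ≤
      (axis m (A + 1) A).indicator (fun _ => (MM m (A + 1) * MM m (A + 1) : ℝ)) y := by
  by_cases hy : y ∈ cyl m A 0
  · rw [Set.indicator_of_mem (mem_axis_succ_self hy)]
    have hterm : ∀ v ∈ range (m A),
        ‖(MM m A • D m (v * MM m A)) y‖ ≤ MM m A * MM m (A + 1) := fun v hv => by
      rw [Pi.smul_apply, nsmul_eq_mul, norm_mul, Complex.norm_natCast]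
      gcongr
      refine (norm_D_le _ y).trans ?_
      exact_mod_cast Nat.mul_le_mul_right _ (mem_range.1 hv).le
    calc ‖∑ v ∈ range (m A), (MM m A • D m (v * MM m A)) y‖
        ≤ ∑ _v ∈ range (m A), (MM m A * MM m (A + 1) : ℝ) := norm_sum_le_of_le _ hterm
      _ = MM m (A + 1) * MM m (A + 1) := by
          rw [sum_const, card_range, nsmul_eq_mul, ← mul_assoc, ← Nat.cast_mul, ← MM_succ]
  · rw [sum_eq_zero fun v hv => by
      simp [D_mul_MM_apply_eq_zero hm (mem_range.1 hv).le hy], norm_zero]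
    exact indicator_axis_nonneg _ _ _

lemma mul_indicator_axis_le {A : ℕ} {y : G m} (hA : y A = 0) (j : ℕ) :
    m A * (axis m A j).indicator (fun _ => (MM m A * MM m (j + 1) : ℝ)) y ≤
      (axis m (A + 1) j).indicator (fun _ => (MM m (A + 1) * MM m (j + 1) : ℝ)) y := by
  by_cases hy : y ∈ axis m A j
  · rw [Set.indicator_of_mem hy, Set.indicator_of_mem (mem_axis_succ hy hA), MM_succ A,
      Nat.cast_mul, mul_assoc]
  · rw [Set.indicator_of_notMem hy, mul_zero]
    exact indicator_axis_nonneg _ _ _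

lemma dirichletSum_MM_succ_apply (hm : ∀ n, 2 ≤ m n) (A : ℕ) (y : G m) :
    dirichletSum m (MM m (A + 1)) y =
      (if y A = 0 then (m A : ℂ) else 0) * dirichletSum m (MM m A) y +
        ∑ v ∈ range (m A), (MM m A • D m (v * MM m A)) y := by
  have hmA : m A ≠ 0 := by have := hm A; omega
  rw [MM_succ, dirichletSum_mul_MM hm le_rfl, sum_add_distrib, ← sum_mul, add_comm,
    Pi.add_apply, Pi.mul_apply, Finset.sum_apply, Finset.sum_apply, ← sum_rade_pow hmA]
  rfl

lemma norm_dirichletSum_MM_le (hm : ∀ n, 2 ≤ m n) (A : ℕ) (y : G m) :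
    ‖dirichletSum m (MM m A) y‖ ≤
      ∑ j ∈ range A, (axis m A j).indicator (fun _ => (MM m A * MM m (j + 1) : ℝ)) y := by
  induction A with
  | zero => simp [dirichletSum, MM, D_zero]
  | succ A ih =>
    have hold : ‖(if y A = 0 then (m A : ℂ) else 0) * dirichletSum m (MM m A) y‖ ≤
        ∑ j ∈ range A,
          (axis m (A + 1) j).indicator (fun _ => (MM m (A + 1) * MM m (j + 1) : ℝ)) y := by
      split_ifs with hA
      · rw [norm_mul, Complex.norm_natCast]
        refine (mul_le_mul_of_nonneg_left ih (Nat.cast_nonneg _)).trans ?_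
        rw [mul_sum]
        exact sum_le_sum fun j _ => mul_indicator_axis_le hA j
      · rw [zero_mul, norm_zero]
        exact sum_nonneg fun j _ => indicator_axis_nonneg _ _ _
    rw [dirichletSum_MM_succ_apply hm, sum_range_succ]
    exact norm_add_le_of_le hold (norm_smul_sum_D_mul_MM_le hm A y)

lemma memLp_dirichletSum {μ : Measure (G m)} [IsFiniteMeasure μ] {p : ℝ≥0∞} (n : ℕ) :
    MemLp (dirichletSum m n) p μ :=
  memLp_finsetSum' _ fun i _ => memLp_D i

section

variable {μ : Measure (G m)} [IsVilenkinHaar μ] {B : ℕ}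

lemma lpNorm_dirichletSum_MM_le (hm : ∀ n, 2 ≤ m n) (hB : ∀ n, m n ≤ B) (A : ℕ) :
    lpNorm (dirichletSum m (MM m A)) 1 μ ≤ 2 * B * MM m A := by
  have hMA : (0 : ℝ) < MM m A := by exact_mod_cast MM_pos hm A
  have hind (j : ℕ) :
      MemLp ((axis m A j).indicator fun _ => (MM m A * MM m (j + 1) : ℝ)) 1 μ :=
    memLp_indicator_const 1 (measurableSet_axis A j) _ (.inr (measure_ne_top _ _))
  have hterm (j : ℕ) :
      lpNorm ((axis m A j).indicator fun _ => (MM m A * MM m (j + 1) : ℝ)) 1 μ ≤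
        B * MM m (j + 1) := by
    rw [lpNorm_one_indicator_const (measurableSet_axis A j), Real.norm_of_nonneg (by positivity)]
    calc μ.real (axis m A j) * (MM m A * MM m (j + 1))
        ≤ m j / MM m A * (MM m A * MM m (j + 1)) := by
          gcongr
          exact measureReal_axis_le A (by have := hm j; omega)
      _ = m j * MM m (j + 1) := by field_simp
      _ ≤ B * MM m (j + 1) := by gcongr; exact hB j
  have hsum : ∑ j ∈ range A, MM m (j + 1) ≤ 2 * MM m A :=
    (Nat.le_add_right _ _).trans ((sum_range_succ' (MM m) A).symm.trans_le (sum_MM_le hm A))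
  calc lpNorm (dirichletSum m (MM m A)) 1 μ
      ≤ lpNorm (∑ j ∈ range A,
          (axis m A j).indicator fun _ => (MM m A * MM m (j + 1) : ℝ)) 1 μ :=
        lpNorm_mono_real (memLp_finsetSum' _ fun j _ => hind j) fun y => by
          simpa only [Finset.sum_apply] using norm_dirichletSum_MM_le hm A y
    _ ≤ ∑ j ∈ range A, (B * MM m (j + 1) : ℝ) :=
        (lpNorm_sum_le (fun j _ => hind j) le_rfl).trans (sum_le_sum fun j _ => hterm j)
    _ ≤ B * (2 * MM m A) := by rw [← mul_sum]; gcongr; exact_mod_cast hsum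
    _ = 2 * B * MM m A := by ring

lemma lpNorm_dirichletSum_mul_MM_le (hm : ∀ n, 2 ≤ m n) (hB : ∀ n, m n ≤ B) {A u : ℕ}
    (hu : u ≤ m A) :
    lpNorm (dirichletSum m (u * MM m A)) 1 μ ≤ 3 * B * (u * MM m A : ℕ) := by
  have hterm : ∀ v ∈ range u,
      lpNorm (MM m A • D m (v * MM m A) + rade m A ^ v * dirichletSum m (MM m A)) 1 μ ≤
        3 * B * MM m A := fun v hv => by
    have hvm : v ≤ m A := (mem_range.1 hv).le.trans hu
    calc lpNorm (MM m A • D m (v * MM m A) + rade m A ^ v * dirichletSum m (MM m A)) 1 μ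
        ≤ MM m A * lpNorm (D m (v * MM m A)) 1 μ + lpNorm (dirichletSum m (MM m A)) 1 μ := by
          refine (lpNorm_add_le (memLp_nsmul (memLp_D _) _) le_rfl).trans (add_le_add ?_ ?_)
          · rw [lpNorm_nsmul, nsmul_eq_mul]
          · exact lpNorm_rade_pow_mul_le (memLp_dirichletSum _) A v
      _ ≤ MM m A * B + 2 * B * MM m A := by
          gcongr
          · exact (lpNorm_D_mul_MM_le hm hvm).trans (by exact_mod_cast hvm.trans (hB A))
          · exact lpNorm_dirichletSum_MM_le hm hB A
      _ = 3 * B * MM m A := by ring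
  rw [dirichletSum_mul_MM hm hu]
  calc _ ≤ ∑ _v ∈ range u, (3 * B * MM m A : ℝ) :=
        (lpNorm_sum_le (fun v _ => (memLp_nsmul (memLp_D _) _).add
          (memLp_rade_pow_mul (memLp_dirichletSum _) A v)) le_rfl).trans (sum_le_sum hterm)
    _ = 3 * B * (u * MM m A : ℕ) := by
        rw [sum_const, card_range, nsmul_eq_mul]
        push_cast
        ring

theorem lpNorm_dirichletSum_le (hm : ∀ n, 2 ≤ m n) (hB : ∀ n, m n ≤ B) (n : ℕ) :
    lpNorm (dirichletSum m n) 1 μ ≤ (3 * B + 1) * n := by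
  induction n using digit_induction hm with
  | zero => simp [dirichletSum]
  | step A u j _ hu hj ih =>
    rw [dirichletSum_mul_MM_add hm hu hj.le]
    have hD : lpNorm (j • D m (u * MM m A)) 1 μ ≤ (u * MM m A : ℕ) := by
      rw [lpNorm_nsmul, nsmul_eq_mul]
      calc j * lpNorm (D m (u * MM m A)) 1 μ ≤ MM m A * u :=
            mul_le_mul (by exact_mod_cast hj.le) (lpNorm_D_mul_MM_le hm hu.le) lpNorm_nonneg
              (Nat.cast_nonneg _)
        _ = (u * MM m A : ℕ) := by push_cast; ring
    calc lpNorm (dirichletSum m (u * MM m A) + j • D m (u * MM m A) +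
          rade m A ^ u * dirichletSum m j) 1 μ
        ≤ 3 * B * (u * MM m A : ℕ) + (u * MM m A : ℕ) + (3 * B + 1) * j := by
          refine (lpNorm_add_le ((memLp_dirichletSum _).add (memLp_nsmul (memLp_D _) _))
            le_rfl).trans (add_le_add ((lpNorm_add_le (memLp_dirichletSum _) le_rfl).trans
              (add_le_add (lpNorm_dirichletSum_mul_MM_le hm hB hu.le) hD)) ?_)
          exact (lpNorm_rade_pow_mul_le (memLp_dirichletSum _) A u).trans ih
      _ = (3 * B + 1) * (u * MM m A + j : ℕ) := by push_cast; ring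

end

/-- The Nörlund kernel multiplied by its normalization: `Q_n F_n = ∑_{i < n} q_i D_{n-i}`. -/
def norlundSum (m : ℕ → ℕ) (q : ℕ → ℝ) (n : ℕ) : G m → ℂ := ∑ i ∈ range n, q i • D m (n - i)

section

variable {q : ℕ → ℝ}

lemma F_eq_smul_norlundSum (n : ℕ) : F m q n = (Q q n)⁻¹ • norlundSum m q n := by
  ext x
  simp only [F, norlundSum, Pi.smul_apply, Finset.sum_apply, Complex.real_smul,
    Complex.ofReal_inv]
  congr 1
  refine sum_nbij' (n - ·) (n - ·) ?_ ?_ ?_ ?_ fun k hk => ?_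
  case refine_5 => rw [Nat.sub_sub_self (mem_Icc.1 hk).2]
  all_goals simp only [mem_Icc, mem_range]; omega

lemma norlundSum_add (a b : ℕ) :
    norlundSum m q (a + b) =
      ∑ i ∈ range a, q i • D m (a + b - i) + norlundSum m (fun i => q (a + i)) b := by
  simp only [norlundSum, sum_range_add, Nat.add_sub_add_left]

lemma norlundSum_succ_mul_MM (A u : ℕ) :
    norlundSum m q ((u + 1) * MM m A) = ∑ i ∈ range (MM m A), q i • D m ((u + 1) * MM m A - i) +
      norlundSum m (fun i => q (MM m A + i)) (u * MM m A) := by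
  rw [show (u + 1) * MM m A = MM m A + u * MM m A by ring, norlundSum_add]

lemma norlundSum_mul_MM_add (hm : ∀ n, 2 ≤ m n) {A u j : ℕ} (hu : u < m A) (hj : j ≤ MM m A) :
    norlundSum m q (u * MM m A + j) = Q q j • D m (u * MM m A) +
      rade m A ^ u * norlundSum m q j + norlundSum m (fun i => q (j + i)) (u * MM m A) := by
  have hD : ∀ i ∈ range j, q i • D m (j + u * MM m A - i) =
      q i • D m (u * MM m A) + rade m A ^ u * q i • D m (j - i) := fun i hi => by
    have := mem_range.1 hi
    rw [show j + u * MM m A - i = u * MM m A + (j - i) by omega,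
      D_mul_MM_add hm hu (by omega), smul_add, mul_smul_comm]
  rw [add_comm, norlundSum_add, sum_congr rfl hD, sum_add_distrib, ← sum_smul, ← mul_sum]
  rfl

lemma sum_smul_D_succ_mul_MM_sub (hm : ∀ n, 2 ≤ m n) {A u : ℕ} (hu : u < m A) :
    ∑ i ∈ range (MM m A), q i • D m ((u + 1) * MM m A - i) =
      Q q (MM m A) • D m ((u + 1) * MM m A) - rade m A ^ u *
        (psi m (MM m A - 1) * conj (∑ i ∈ range (MM m A), q i • D m i)) := by
  have hD : ∀ i ∈ range (MM m A), q i • D m ((u + 1) * MM m A - i) =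
      q i • D m ((u + 1) * MM m A) -
        rade m A ^ u * psi m (MM m A - 1) * conj (q i • D m i) := fun i hi => by
    have hconj : conj (q i • D m i) = q i • conj (D m i) := by
      ext x
      simp
    rw [D_succ_mul_MM_sub hm hu (mem_range.1 hi).le, smul_sub, hconj, mul_smul_comm]
  rw [sum_congr rfl hD, sum_sub_distrib, ← sum_smul, ← mul_sum, map_sum, mul_assoc]
  rfl

lemma memLp_norlundSum {μ : Measure (G m)} [IsFiniteMeasure μ] {p : ℝ≥0∞} (n : ℕ) :
    MemLp (norlundSum m q n) p μ :=
  memLp_finsetSum' _ fun _ _ => (memLp_D _).const_smul _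

lemma norm_F_le_of_apply_ne_zero (hm : ∀ n, 2 ≤ m n) (hpos : ∀ n, 0 ≤ q n) {k : ℕ} {x : G m}
    (hx : x k ≠ 0) (n : ℕ) : ‖F m q n x‖ ≤ MM m (k + 1) := by
  have hsum : ‖norlundSum m q n x‖ ≤ Q q n * MM m (k + 1) := by
    rw [norlundSum, Finset.sum_apply, Q, sum_mul]
    refine norm_sum_le_of_le _ fun i _ => ?_
    rw [Pi.smul_apply, norm_smul, Real.norm_of_nonneg (hpos i)]
    exact mul_le_mul_of_nonneg_left (norm_D_le_of_apply_ne_zero hm hx _) (hpos i)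
  rw [F_eq_smul_norlundSum, Pi.smul_apply, norm_smul, norm_inv,
    Real.norm_of_nonneg (Q_nonneg hpos n)]
  exact inv_mul_le_of_le_mul₀ (Q_nonneg hpos n) (Nat.cast_nonneg _) hsum

variable {μ : Measure (G m)} [IsVilenkinHaar μ] {B : ℕ}

lemma lpNorm_Q_smul_D_mul_MM_le (hm : ∀ n, 2 ≤ m n) (hB : ∀ n, m n ≤ B) (hpos : ∀ n, 0 ≤ q n)
    {A u : ℕ} (hu : u ≤ m A) (n : ℕ) :
    lpNorm (Q q n • D m (u * MM m A)) 1 μ ≤ B * Q q n := by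
  rw [lpNorm_const_smul, coe_nnnorm, Real.norm_of_nonneg (Q_nonneg hpos n), mul_comm]
  have huB : (u : ℝ) ≤ B := by exact_mod_cast hu.trans (hB A)
  exact mul_le_mul_of_nonneg_right ((lpNorm_D_mul_MM_le hm hu).trans huB) (Q_nonneg hpos n)

lemma lpNorm_sum_smul_D_succ_mul_MM_sub_le (hm : ∀ n, 2 ≤ m n) (hB : ∀ n, m n ≤ B)
    (hpos : ∀ n, 0 ≤ q n) (hanti : Antitone q) {A u : ℕ} (hu : u < m A) :
    lpNorm (∑ i ∈ range (MM m A), q i • D m ((u + 1) * MM m A - i)) 1 μ ≤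
      (4 * B + 1) * Q q (MM m A) := by
  have hmem : MemLp (∑ i ∈ range (MM m A), q i • D m i) 1 μ :=
    memLp_finsetSum' _ fun _ _ => (memLp_D _).const_smul _
  have hconj : MemLp (conj (∑ i ∈ range (MM m A), q i • D m i)) 1 μ := hmem.star
  have hpsi (x : G m) : ‖psi m (MM m A - 1) x‖ ≤ 1 := (norm_psi _ x).le
  have habel : lpNorm (∑ i ∈ range (MM m A), q i • D m i) 1 μ ≤ (3 * B + 1) * Q q (MM m A) :=
    lpNorm_sum_smul_le_of_antitone le_rfl memLp_D hpos hanti (lpNorm_dirichletSum_le hm hB) _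
  rw [sum_smul_D_succ_mul_MM_sub hm hu]
  calc _ ≤ B * Q q (MM m A) + lpNorm (conj (∑ i ∈ range (MM m A), q i • D m i)) 1 μ := by
        refine (lpNorm_sub_le ((memLp_D _).const_smul _) le_rfl).trans
          (add_le_add (lpNorm_Q_smul_D_mul_MM_le hm hB hpos hu _) ?_)
        exact (lpNorm_rade_pow_mul_le (memLp_mul_of_norm_le_one
          (measurable_psi _).aestronglyMeasurable hpsi hconj) A u).trans
            (lpNorm_mul_le_of_norm_le_one hpsi hconj)
    _ ≤ B * Q q (MM m A) + (3 * B + 1) * Q q (MM m A) := by rw [lpNorm_conj]; gcongr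
    _ = (4 * B + 1) * Q q (MM m A) := by ring

lemma lpNorm_norlundSum_mul_MM_le (hm : ∀ n, 2 ≤ m n) (hB : ∀ n, m n ≤ B)
    (hpos : ∀ n, 0 ≤ q n) (hanti : Antitone q) {A u : ℕ} (hu : u ≤ m A) :
    lpNorm (norlundSum m q (u * MM m A)) 1 μ ≤ u * ((4 * B + 1) * Q q (MM m A)) := by
  induction u generalizing q with
  | zero => simp [norlundSum]
  | succ u ih =>
    rw [norlundSum_succ_mul_MM]
    calc _ ≤ (4 * B + 1) * Q q (MM m A) +
          u * ((4 * B + 1) * Q (fun i => q (MM m A + i)) (MM m A)) := by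
          refine (lpNorm_add_le' (memLp_norlundSum _) le_rfl).trans (add_le_add
            (lpNorm_sum_smul_D_succ_mul_MM_sub_le hm hB hpos hanti hu) ?_)
          exact ih (fun n => hpos _) (fun _ _ h => hanti (Nat.add_le_add_left h _)) (by omega)
      _ ≤ (4 * B + 1) * Q q (MM m A) + u * ((4 * B + 1) * Q q (MM m A)) := by
          gcongr
          exact Q_shift_le hanti _ _
      _ = (u + 1 : ℕ) * ((4 * B + 1) * Q q (MM m A)) := by push_cast; ring

lemma lpNorm_norlundSum_mul_MM_add_le (hm : ∀ n, 2 ≤ m n) (hB : ∀ n, m n ≤ B)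
    (hpos : ∀ n, 0 ≤ q n) (hanti : Antitone q) {A u j : ℕ} (hu : u < m A) (hj : j ≤ MM m A) :
    lpNorm (norlundSum m q (u * MM m A + j)) 1 μ ≤
      lpNorm (norlundSum m q j) 1 μ + B * (4 * B + 2) * Q q (MM m A) := by
  have hQj : Q q j ≤ Q q (MM m A) := Q_mono hpos hj
  have huB : (u : ℝ) ≤ B := by exact_mod_cast hu.le.trans (hB A)
  have hfull : lpNorm (norlundSum m (fun i => q (j + i)) (u * MM m A)) 1 μ ≤
      B * ((4 * B + 1) * Q q (MM m A)) :=
    (lpNorm_norlundSum_mul_MM_le hm hB (fun n => hpos _)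
      (fun _ _ h => hanti (Nat.add_le_add_left h _)) hu.le).trans <|
        mul_le_mul huB (mul_le_mul_of_nonneg_left (Q_shift_le hanti _ _) (by positivity))
          (mul_nonneg (by positivity) (Q_nonneg (fun n => hpos _) _)) (Nat.cast_nonneg _)
  rw [norlundSum_mul_MM_add hm hu hj]
  calc _ ≤ B * Q q j + lpNorm (norlundSum m q j) 1 μ + B * ((4 * B + 1) * Q q (MM m A)) := by
        refine (lpNorm_add_le' (memLp_norlundSum _) le_rfl).trans (add_le_add
          ((lpNorm_add_le ((memLp_D _).const_smul _) le_rfl).trans (add_le_add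
            (lpNorm_Q_smul_D_mul_MM_le hm hB hpos hu.le j) ?_)) hfull)
        exact lpNorm_rade_pow_mul_le (memLp_norlundSum _) A u
    _ ≤ B * Q q (MM m A) + lpNorm (norlundSum m q j) 1 μ + B * ((4 * B + 1) * Q q (MM m A)) := by
        gcongr
    _ = lpNorm (norlundSum m q j) 1 μ + B * (4 * B + 2) * Q q (MM m A) := by ring

theorem lpNorm_norlundSum_le (hm : ∀ n, 2 ≤ m n) (hB : ∀ n, m n ≤ B) (hpos : ∀ n, 0 ≤ q n)
    (hanti : Antitone q) {n A : ℕ} (hn : n < MM m A) :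
    lpNorm (norlundSum m q n) 1 μ ≤ B * (4 * B + 2) * ∑ j ∈ range A, Q q (MM m j) := by
  induction n using digit_induction hm generalizing A with
  | zero =>
    simp only [norlundSum, range_zero, sum_empty, lpNorm_zero]
    have := sum_nonneg fun j (_ : j ∈ range A) => Q_nonneg hpos (MM m j)
    positivity
  | step A' u j hu0 hu hj ih =>
    have hlt : MM m A' < MM m A :=
      (Nat.le_mul_of_pos_left _ hu0).trans_lt ((Nat.le_add_right _ _).trans_lt hn)
    calc _ ≤ B * (4 * B + 2) * ∑ j ∈ range A', Q q (MM m j) + B * (4 * B + 2) * Q q (MM m A') :=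
          (lpNorm_norlundSum_mul_MM_add_le hm hB hpos hanti hu hj.le).trans
            (add_le_add_left (ih hj) _)
      _ = B * (4 * B + 2) * ∑ j ∈ range (A' + 1), Q q (MM m j) := by
          rw [sum_range_succ, mul_add (B * (4 * B + 2) : ℝ)]
      _ ≤ B * (4 * B + 2) * ∑ j ∈ range A, Q q (MM m j) := by
          gcongr
          · exact fun j _ _ => Q_nonneg hpos _
          · exact (MM_strictMono hm).lt_iff_lt.1 hlt

theorem lpNorm_F_le (hm : ∀ n, 2 ≤ m n) (hB : ∀ n, m n ≤ B) (hpos : ∀ n, 0 ≤ q n)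
    (hanti : Antitone q) {C : ℝ} (hC : 0 ≤ C)
    (hsum : ∀ A n, MM m A ≤ n → ∑ j ∈ range (A + 1), Q q (MM m j) ≤ C * Q q n) {n : ℕ}
    (hn : 1 ≤ n) :
    lpNorm (F m q n) 1 μ ≤ B * (4 * B + 2) * C := by
  obtain ⟨A, hA, hA'⟩ := exists_MM_le_lt_MM_succ hm hn
  rw [F_eq_smul_norlundSum, lpNorm_const_smul, coe_nnnorm, norm_inv,
    Real.norm_of_nonneg (Q_nonneg hpos n)]
  refine inv_mul_le_of_le_mul₀ (Q_nonneg hpos n) (by positivity) ?_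
  calc lpNorm (norlundSum m q n) 1 μ ≤ B * (4 * B + 2) * ∑ j ∈ range (A + 1), Q q (MM m j) :=
        lpNorm_norlundSum_le hm hB hpos hanti hA'
    _ ≤ B * (4 * B + 2) * (C * Q q n) := by gcongr; exact hsum A n hA
    _ = Q q n * (B * (4 * B + 2) * C) := by ring

theorem lintegral_enorm_F_sub_eq (x : G m) (n : ℕ) :
    ∫⁻ t, ‖F m q n (x - t)‖ₑ ∂μ =
      ENNReal.ofReal (lpNorm (F m q n) 1 (μ.map fun t => x - t)) := by
  have hF : MemLp (F m q n) 1 (μ.map fun t => x - t) := by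
    rw [F_eq_smul_norlundSum]
    exact (memLp_norlundSum n).const_smul _
  rw [ofReal_lpNorm hF, eLpNorm_map_measure hF.1 (measurable_sub_left x).aemeasurable,
    eLpNorm_one_eq_lintegral_enorm]
  rfl

theorem setLIntegral_cyl_enorm_F_sub_le (hm : ∀ n, 2 ≤ m n) (hpos : ∀ n, 0 ≤ q n) {k N : ℕ}
    (hk : k < N) {x : G m} (hx : x k ≠ 0) (n : ℕ) :
    ∫⁻ t in cyl m N 0, ‖F m q n (x - t)‖ₑ ∂μ ≤
      ENNReal.ofReal (MM m (k + 1) / MM m N) := by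
  have hpointwise : ∀ t ∈ cyl m N 0, ‖F m q n (x - t)‖ₑ ≤ MM m (k + 1) := fun t ht => by
    have hxt : (x - t) k ≠ 0 := by rwa [Pi.sub_apply, ht k hk, Pi.zero_apply, sub_zero]
    rw [← ofReal_norm, ← ENNReal.ofReal_natCast]
    exact ENNReal.ofReal_le_ofReal (norm_F_le_of_apply_ne_zero hm hpos hxt n)
  calc ∫⁻ t in cyl m N 0, ‖F m q n (x - t)‖ₑ ∂μ
      ≤ ∫⁻ _ in cyl m N 0, MM m (k + 1) ∂μ := setLIntegral_mono measurable_const hpointwise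
    _ = ENNReal.ofReal (MM m (k + 1) / MM m N) := by
        rw [setLIntegral_const, IsVilenkinHaar.measure_cyl,
          ENNReal.ofReal_div_of_pos (by exact_mod_cast MM_pos hm N), ENNReal.ofReal_natCast,
          ENNReal.ofReal_natCast, div_eq_mul_inv]

end

lemma apply_ne_zero_of_mem_cyl_oneSpike {k sk N : ℕ} (hk : k < N) (hsk : 1 ≤ sk) (hsk' : sk < m k)
    {x : G m} (hx : x ∈ cyl m N (oneSpike m k sk)) : x k ≠ 0 := by
  rw [hx k hk, oneSpike, if_pos rfl, Ne, ZMod.natCast_eq_zero_iff]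
  exact Nat.not_dvd_of_pos_of_lt hsk hsk'

end

/-- Let `0 < α ≤ 1` and let `{q_n}` be a non-increasing sequence of
non-negative reals with `q_0 > 0` satisfying `n^α/Q_n = O(1)` and
`(q_n - q_{n+1})/n^{α-2} = O(1)`. Then there is a constant `c_α` such that for all `N`, all
`r ≥ M_N`, all `0 ≤ k ≤ N-1`, `1 ≤ s_k ≤ m_k - 1` and all `x ∈ I_N(s_k e_k)`:
`∫_{I_N} |F_r(x-t)| dμ(t) ≤ c_α M_k / M_N`. -/
theorem statement9
    (m : ℕ → ℕ) (hm : ∀ n, 2 ≤ m n) (hmb : ∃ B, ∀ n, m n ≤ B)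
    (μ : Measure (G m)) [IsProbabilityMeasure μ]
    (hμ : ∀ (n : ℕ) (x : G m), μ (cyl m n x) = ((MM m n : ℝ≥0∞))⁻¹)
    (α : ℝ) (hα0 : 0 < α) (hα1 : α ≤ 1)
    (q : ℕ → ℝ) (hq0 : 0 < q 0) (hqnn : ∀ n, 0 ≤ q n) (hqmono : ∀ n, q (n + 1) ≤ q n)
    (hQ : (fun n : ℕ => (n : ℝ) ^ α / Q q n) =O[atTop] (fun _ => (1 : ℝ)))
    (hq' : (fun n : ℕ => (q n - q (n + 1)) / (n : ℝ) ^ (α - 2)) =O[atTop] (fun _ => (1 : ℝ))) :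
    ∃ c : ℝ, ∀ N r : ℕ, MM m N ≤ r → ∀ k : ℕ, k ≤ N - 1 → ∀ sk : ℕ,
      1 ≤ sk → sk ≤ m k - 1 →
      ∀ x ∈ cyl m N (oneSpike m k sk),
        ∫⁻ t in cyl m N 0, (‖F m q r (x - t)‖₊ : ℝ≥0∞) ∂μ ≤
          ENNReal.ofReal (c * (MM m k : ℝ) / (MM m N : ℝ)) := by
  obtain ⟨B, hB⟩ := hmb
  have : IsVilenkinHaar μ := ⟨hμ⟩
  have hanti : Antitone q := antitone_nat_of_succ_le hqmono
  obtain ⟨C, hC, hsum⟩ := exists_sum_Q_MM_le hm hα0 hα1 hq0 hqnn hanti hQ hq'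
  refine ⟨B * (4 * B + 2) * C + B, fun N r hr k hk sk hsk hsk' x hx => ?_⟩
  rcases Nat.eq_zero_or_pos N with rfl | hN
  · obtain rfl : k = 0 := by omega
    calc _ ≤ ∫⁻ t, ‖F m q r (x - t)‖ₑ ∂μ := setLIntegral_le_lintegral _ _
      _ = ENNReal.ofReal (lpNorm (F m q r) 1 (μ.map fun t => x - t)) :=
        lintegral_enorm_F_sub_eq x r
      _ ≤ _ := ENNReal.ofReal_le_ofReal <| by
        simpa [MM] using (lpNorm_F_le hm hB hqnn hanti hC hsum hr).trans
          (le_add_of_nonneg_right B.cast_nonneg)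
  · have hxk : x k ≠ 0 :=
      apply_ne_zero_of_mem_cyl_oneSpike (by omega) hsk (by have := hm k; omega) hx
    refine (setLIntegral_cyl_enorm_F_sub_le hm hqnn (by omega) hxk r).trans
      (ENNReal.ofReal_le_ofReal ?_)
    have hmk : (m k : ℝ) ≤ B := by exact_mod_cast hB k
    rw [MM_succ, Nat.cast_mul]
    gcongr
    exact hmk.trans (le_add_of_nonneg_left (by positivity))

end Vilenkin
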